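/- arXiv:2605.22486 — 2 statements merged into one kernel-verified Lean document; each statement's English description precedes it below -/
import Mathlib

section
/- Global exponential stability of the PI dynamics (Theorem 3). Let f : E → ℝ and h : E → F₁ be continuously differentiable, let Φ : E → F₁ × F₂, Φ(x) = (h(x), q(x)), be a global C¹ diffeomorphism satisfying the orthonormality conditions, and assume: (i) there exists m̲ > 0 with ⟨Dh(x)†v, Dh(x)†v⟩ ≥ m̲‖v‖² for all x, v, and ‖Dh(x)∘Dh(x)†‖ ≤ m̄ for all x; (ii) f̃ = f ∘ p with p(η) = Φ⁻¹(0,η) is ρ_η-strongly convex (ρ_η > 0) with ∇f̃(η*) = 0, x* = p(η*); (iii) Φ and Φ⁻¹ are globally Lipschitz with constants L_Φ and L_Ψ; (iv) there exists L₁ > 0 such that ‖Dq(x̃)(∇f(x̃)) − Dq(p̂)(∇f(p̂))‖ ≤ L₁‖y‖ for all (y,η), where x̃ = Φ⁻¹(y,η), p̂ = Φ⁻¹(0,η); (v) φ(x) = −(Dh(x)∘Dh(x)†)⁻¹( Dh(x)(∇f(x)) ) is globally Lipschitz with constant L₂, and set λ* = φ(x*). Then there exists k_p* > 0 such that for every k_p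 > k_p* and every k_i with 0 < k_i < m̲ k_p², there exist c_π > 0 and ρ_π > 0 such that every pair of differentiable curves x : [0,∞) → E, z : [0,∞) → F₁ satisfying the PI dynamics x'(t) = −∇f(x(t)) − Dh(x(t))†( k_p h(x(t)) + k_i z(t) ) and z'(t) = h(x(t)) obeys, with λ(t) = k_p h(x(t)) + k_i z(t), the bound ‖(x(t) − x*, λ(t) − λ*)‖ ≤ c_π e^{−ρ_π t} ‖(x(0) − x*, λ(0) − λ*)‖ for all t ≥ 0, where the norm on E × F₁ is the ℓ² product norm. -/
open scoped RealInnerProductSpace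

set_option maxHeartbeats 1000000 in
lemma pi_aux_fast {F : Type*} [NormedAddCommGroup F] [InnerProductSpace ℝ F]
    (A : F →L[ℝ] F) (a B ε ω κ : ℝ) (ha : 0 < a) (hB : 0 < B) (hε : 0 < ε) (hω : 0 < ω)
    (hεB : ε * B ^ 2 = a) (hω1 : ω ≤ 2 * a) (hω2 : ω ≤ ε * a ^ 2) (hκ : 0 < κ) (hκa : κ ≤ a)
    (hA : ∀ v, a * ‖v‖ ^ 2 ≤ ⟪v, A v⟫) (hAB : ∀ v, ‖A v‖ ≤ B * ‖v‖)
    (W ζ φ : F) :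
    2 * ⟪W, κ • (W - ζ) - A (W - φ)⟫ + 2 * (1 + ω / 2 / κ) * ⟪ζ, κ • (W - ζ)⟫
      + 2 * (ε * κ) * ⟪W - ζ, -A (W - φ)⟫
      ≤ -(ω / 2) * (‖W‖ ^ 2 + ‖ζ‖ ^ 2) + 2 * B * (1 + ε * a) * ‖φ‖ * (‖W‖ + ‖ζ‖) := by
  have h1 := hA W
  have h2 : ⟪ζ, A W⟫ ≤ ‖ζ‖ * (B * ‖W‖) :=
    (real_inner_le_norm _ _).trans (by gcongr; exact hAB W)
  have h3 : ⟪W, A φ⟫ ≤ ‖W‖ * (B * ‖φ‖) :=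
    (real_inner_le_norm _ _).trans (by gcongr; exact hAB φ)
  have h4 : -⟪ζ, A φ⟫ ≤ ‖ζ‖ * (B * ‖φ‖) := by
    rw [← inner_neg_left, ← norm_neg ζ]
    exact (real_inner_le_norm _ _).trans (by gcongr; exact hAB φ)
  have h5 : ⟪ζ, W⟫ ≤ ‖ζ‖ * ‖W‖ := real_inner_le_norm _ _
  have hcomm : ⟪W, ζ⟫ = ⟪ζ, W⟫ := real_inner_comm _ _
  have hWW : ⟪W, W⟫ = ‖W‖ ^ 2 := real_inner_self_eq_norm_sq W
  have hζζ : ⟪ζ, ζ⟫ = ‖ζ‖ ^ 2 := real_inner_self_eq_norm_sq ζ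
  have e : 2 * ⟪W, κ • (W - ζ) - A (W - φ)⟫ + 2 * (1 + ω / 2 / κ) * ⟪ζ, κ • (W - ζ)⟫
      + 2 * (ε * κ) * ⟪W - ζ, -A (W - φ)⟫
      = 2 * (κ * ‖W‖ ^ 2) - 2 * (κ * ‖ζ‖ ^ 2) - 2 * ((1 + ε * κ) * ⟪W, A W⟫)
        + 2 * ((1 + ε * κ) * ⟪W, A φ⟫)
        + ω * ⟪ζ, W⟫ - ω * ‖ζ‖ ^ 2 + 2 * (ε * κ * ⟪ζ, A W⟫) + 2 * (ε * κ * (-⟪ζ, A φ⟫)) := by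
    simp only [map_sub, inner_sub_right, inner_sub_left, inner_neg_right, inner_smul_right,
      hcomm, hWW, hζζ]
    field_simp
    ring
  rw [e]
  have k1 : (1 + ε * κ) * (a * ‖W‖ ^ 2) ≤ (1 + ε * κ) * ⟪W, A W⟫ := by gcongr
  have k2 : ε * κ * ⟪ζ, A W⟫ ≤ ε * κ * (‖ζ‖ * (B * ‖W‖)) := by gcongr
  have k3 : (1 + ε * κ) * ⟪W, A φ⟫ ≤ (1 + ε * a) * (‖W‖ * (B * ‖φ‖)) := by
    calc _ ≤ (1 + ε * κ) * (‖W‖ * (B * ‖φ‖)) := by gcongr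
      _ ≤ _ := by gcongr
  have k4 : ε * κ * (-⟪ζ, A φ⟫) ≤ (1 + ε * a) * (‖ζ‖ * (B * ‖φ‖)) := by
    calc _ ≤ ε * κ * (‖ζ‖ * (B * ‖φ‖)) := by gcongr
      _ ≤ ε * a * (‖ζ‖ * (B * ‖φ‖)) := by gcongr
      _ ≤ _ := by gcongr; linarith
  have k5 : ω * ⟪ζ, W⟫ ≤ ω / 2 * ‖ζ‖ ^ 2 + ω / 2 * ‖W‖ ^ 2 := by
    calc _ ≤ ω * (‖ζ‖ * ‖W‖) := by gcongr
      _ ≤ _ := by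
        have : 0 ≤ ω / 2 * (‖ζ‖ - ‖W‖) ^ 2 := by positivity
        linarith
  have k6 : ω * ‖W‖ ^ 2 ≤ (2 * (a - κ) + ε * κ * a) * ‖W‖ ^ 2 := by
    gcongr
    have : ω * a ≤ (2 * (a - κ) + ε * κ * a) * a := by
      have t1 := mul_le_mul_of_nonneg_right hω1 (sub_nonneg.2 hκa)
      have t2 := mul_le_mul_of_nonneg_right hω2 hκ.le
      linarith
    exact le_of_mul_le_mul_right this ha
  have k7 : 0 ≤ κ * ‖ζ‖ ^ 2 := by positivity
  have y2 : 2 * (ε * κ * (‖ζ‖ * (B * ‖W‖))) ≤ κ * ‖ζ‖ ^ 2 + ε * κ * a * ‖W‖ ^ 2 := by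
    have : 0 ≤ κ * (‖ζ‖ - ε * B * ‖W‖) ^ 2 := by positivity
    have e2 : ε * κ * a * ‖W‖ ^ 2 = ε * κ * (ε * B ^ 2) * ‖W‖ ^ 2 := by rw [hεB]
    rw [e2]
    linarith
  linarith

lemma pi_aux_scalar (ν C L ρ L₁ : ℝ) (hν : 0 < ν) (hC : 0 < C) (hL : 0 ≤ L) (hρ : 0 < ρ)
    (hL₁ : 0 < L₁) :
    ∃ N kps : ℝ, 0 < N ∧ 0 < kps ∧ ∀ k, kps < k → ∀ R e : ℝ, 0 ≤ R → 0 ≤ e →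
      -(ν / 2) * R ^ 2 + C * (L * (R / k + e)) * R + 2 * N * (-ρ * e ^ 2 + L₁ * (R / k) * e)
        ≤ -(ν / 8) * R ^ 2 - N * ρ / 2 * e ^ 2 := by
  obtain ⟨N, hN⟩ : ∃ N, N = (2 * C ^ 2 * L ^ 2 / ν + 1) / ρ := ⟨_, rfl⟩
  have hN0 : 0 < N := by rw [hN]; positivity
  have hNρ : N * ρ = 2 * C ^ 2 * L ^ 2 / ν + 1 := by rw [hN]; field_simp
  refine ⟨N, 8 * C * L / ν + 16 * N * L₁ ^ 2 / (ν * ρ) + 1, hN0, by positivity, ?_⟩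
  intro k hk R e hR he
  have p1 : 0 ≤ 8 * C * L / ν := by positivity
  have p2 : 0 ≤ 16 * N * L₁ ^ 2 / (ν * ρ) := by positivity
  have hk1 : 1 < k := by linarith
  have hk0 : 0 < k := by linarith
  have q1 : C * L / k ≤ ν / 8 := by
    rw [div_le_iff₀ hk0]
    have : 8 * C * L / ν ≤ k := by linarith
    rw [div_le_iff₀ hν] at this
    linarith
  have q2 : 16 * N * L₁ ^ 2 ≤ ν * ρ * k ^ 2 := by
    have : 16 * N * L₁ ^ 2 / (ν * ρ) ≤ k := by linarith
    rw [div_le_iff₀ (by positivity)] at this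
    have : k * (ν * ρ) ≤ k ^ 2 * (ν * ρ) := by gcongr; nlinarith
    linarith
  have r1 : C * L / k * R ^ 2 ≤ ν / 8 * R ^ 2 := by gcongr
  have r2 : C * L * e * R ≤ ν / 8 * R ^ 2 + 2 * C ^ 2 * L ^ 2 / ν * e ^ 2 := by
    have : ν / 8 * R ^ 2 + 2 * C ^ 2 * L ^ 2 / ν * e ^ 2 - C * L * e * R
        = (ν * R - 4 * C * L * e) ^ 2 / (8 * ν) := by field_simp; ring
    have : 0 ≤ (ν * R - 4 * C * L * e) ^ 2 / (8 * ν) := by positivity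
    linarith
  have r3 : 2 * N * (L₁ * (R / k) * e) ≤ ν / 8 * R ^ 2 + N * ρ / 2 * e ^ 2 := by
    obtain ⟨S, hS⟩ : ∃ S, S = R / k := ⟨_, rfl⟩
    have hRS : R = S * k := by rw [hS]; field_simp
    rw [← hS, hRS]
    have t1 : 16 * N * L₁ ^ 2 * S ^ 2 ≤ ν * ρ * k ^ 2 * S ^ 2 := by gcongr
    have t2 : 2 * N * (L₁ * S * e) * ρ ≤ (ν / 8 * (S * k) ^ 2 + N * ρ / 2 * e ^ 2) * ρ := by
      nlinarith [mul_nonneg hN0.le (sq_nonneg (ρ * e - 2 * L₁ * S))]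
    exact le_of_mul_le_mul_right t2 hρ
  have s : C * (L * (R / k + e)) * R = C * L / k * R ^ 2 + C * L * e * R := by field_simp
  have s2 : 0 ≤ e ^ 2 := sq_nonneg e
  nlinarith

lemma pi_aux_decay (U U' : ℝ → ℝ) (r : ℝ) (hU : ∀ t, 0 ≤ t → HasDerivAt U (U' t) t)
    (hle : ∀ t, 0 ≤ t → U' t ≤ -r * U t) (t : ℝ) (ht : 0 ≤ t) :
    U t ≤ Real.exp (-r * t) * U 0 := by
  have hd : ∀ t, 0 ≤ t → HasDerivAt (fun t => U t * Real.exp (r * t))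
      (U' t * Real.exp (r * t) + U t * (Real.exp (r * t) * (r * 1))) t := fun t ht =>
    (hU t ht).mul (((hasDerivAt_id t).const_mul r).exp)
  have hanti : AntitoneOn (fun t => U t * Real.exp (r * t)) (Set.Ici 0) := by
    apply antitoneOn_of_deriv_nonpos (convex_Ici 0)
    · exact fun t ht => (hd t ht).continuousAt.continuousWithinAt
    · intro t ht
      rw [interior_Ici] at ht
      exact (hd t (le_of_lt ht)).differentiableAt.differentiableWithinAt
    · intro t ht
      rw [interior_Ici] at ht
      rw [(hd t (le_of_lt ht)).deriv]
      have := hle t (le_of_lt ht)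
      have e := Real.exp_pos (r * t)
      nlinarith
  have := hanti (Set.mem_Ici.2 le_rfl) (Set.mem_Ici.2 ht) ht
  simp only [mul_zero, Real.exp_zero, mul_one] at this
  have e := Real.exp_pos (-r * t)
  have h1 : Real.exp (r * t) * Real.exp (-r * t) = 1 := by
    rw [← Real.exp_add]; simp
  calc U t = (U t * Real.exp (r * t)) * Real.exp (-r * t) := by rw [mul_assoc, h1, mul_one]
    _ ≤ U 0 * Real.exp (-r * t) := by gcongr
    _ = _ := mul_comm _ _

set_option maxHeartbeats 4000000 in
/-- Derivative estimate of the composite Lyapunov function. -/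
lemma pi_aux_core {F G : Type*} [NormedAddCommGroup F] [InnerProductSpace ℝ F]
    [NormedAddCommGroup G] [InnerProductSpace ℝ G]
    (a B ρ L₁ L : ℝ) (ha : 0 < a) (hB : 0 < B) (hρ : 0 < ρ) (hL₁ : 0 < L₁) (hL : 0 ≤ L) :
    ∃ kps : ℝ, 0 < kps ∧ ∀ k ki, kps < k → 0 < ki → ki < a * k ^ 2 →
      ∃ c₁ r : ℝ, 0 < c₁ ∧ 0 < r ∧ ∀ (A : ℝ → F →L[ℝ] F) (y W φ : ℝ → F) (η g : ℝ → G),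
        (∀ t, 0 ≤ t → ∀ v, a * ‖v‖ ^ 2 ≤ ⟪v, A t v⟫) →
        (∀ t, 0 ≤ t → ∀ v, ‖A t v‖ ≤ B * ‖v‖) →
        (∀ t, 0 ≤ t → HasDerivAt y (-(A t (W t - φ t))) t) →
        (∀ t, 0 ≤ t → HasDerivAt W (k • (-(A t (W t - φ t))) + ki • y t) t) →
        (∀ t, 0 ≤ t → HasDerivAt η (-g t) t) →
        (∀ t, 0 ≤ t → ‖φ t‖ ≤ L * (‖y t‖ + ‖η t‖)) →
        (∀ t, 0 ≤ t → ρ * ‖η t‖ ^ 2 - L₁ * ‖y t‖ * ‖η t‖ ≤ ⟪η t, g t⟫) →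
        ∀ t, 0 ≤ t → ‖y t‖ ^ 2 + ‖η t‖ ^ 2 + ‖W t‖ ^ 2
          ≤ c₁ * Real.exp (-r * t) * (‖y 0‖ ^ 2 + ‖η 0‖ ^ 2 + ‖W 0‖ ^ 2) := by
  obtain ⟨ε, hε⟩ : ∃ ε, ε = a / B ^ 2 := ⟨_, rfl⟩
  have hε0 : 0 < ε := by rw [hε]; positivity
  have hεB : ε * B ^ 2 = a := by rw [hε]; field_simp
  obtain ⟨ω, hω⟩ : ∃ ω, ω = min (2 * a) (ε * a ^ 2) := ⟨_, rfl⟩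
  have hω0 : 0 < ω := by rw [hω]; positivity
  have hω1 : ω ≤ 2 * a := by rw [hω]; exact min_le_left _ _
  have hω2 : ω ≤ ε * a ^ 2 := by rw [hω]; exact min_le_right _ _
  obtain ⟨N, kps, hN, hkps, hs⟩ := pi_aux_scalar (ω / 2) (2 * B * (1 + ε * a)) L ρ L₁
    (by positivity) (by positivity) hL hρ hL₁
  refine ⟨kps, hkps, fun k ki hk hki hkik => ?_⟩
  have hk0 : 0 < k := hkps.trans hk
  obtain ⟨κ, hκ⟩ : ∃ κ, κ = ki / k ^ 2 := ⟨_, rfl⟩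
  have hκ0 : 0 < κ := by rw [hκ]; positivity
  have hκa : κ ≤ a := by rw [hκ, div_le_iff₀ (by positivity)]; exact hkik.le
  have hkiκ : ki = κ * k ^ 2 := by rw [hκ]; field_simp
  obtain ⟨δ, hδ⟩ : ∃ δ, δ = ε * κ := ⟨_, rfl⟩
  have hδ0 : 0 < δ := by rw [hδ]; positivity
  obtain ⟨b, hb⟩ : ∃ b, b = 1 + ω / 2 / κ := ⟨_, rfl⟩
  have hb1 : 1 ≤ b := by
    rw [hb]; have : 0 ≤ ω / 2 / κ := by positivity
    linarith
  obtain ⟨P, hP⟩ : ∃ P, P = 1 + b + 2 * δ + k * N := ⟨_, rfl⟩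
  have hP0 : 0 < P := by rw [hP]; positivity
  obtain ⟨d, hd⟩ : ∃ d, d = min (ω / 2 / 8) (N * ρ / 2) := ⟨_, rfl⟩
  have hd0 : 0 < d := by rw [hd]; positivity
  have hd1 : d ≤ ω / 2 / 8 := by rw [hd]; exact min_le_left _ _
  have hd2 : d ≤ N * ρ / 2 := by rw [hd]; exact min_le_right _ _
  refine ⟨(1 + 2 / k ^ 2 + 1 / (k * N)) * (P * (8 + 2 * k ^ 2)), k * d / P, by positivity,
    by positivity, ?_⟩
  intro A y W φ η g hA hAB hy hW hη hφ hg
  let ζ : ℝ → F := fun t => W t - k • y t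
  have hζd : ∀ t, 0 ≤ t → HasDerivAt ζ (k • κ • (W t - ζ t)) t := by
    intro t ht
    have := (hW t ht).sub ((hy t ht).const_smul k)
    refine HasDerivAt.congr_deriv (f := ζ) this ?_
    simp only [ζ]
    rw [hkiκ]
    module
  have hWζ : ∀ t, W t - ζ t = k • y t := fun t => by simp [ζ]
  have hWd : ∀ t, 0 ≤ t → HasDerivAt W (k • (κ • (W t - ζ t) - A t (W t - φ t))) t := by
    intro t ht
    convert hW t ht using 1
    rw [hWζ, hkiκ]
    module
  have hYd : ∀ t, 0 ≤ t → HasDerivAt (fun t => W t - ζ t) (k • (-(A t (W t - φ t)))) t := by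
    intro t ht
    simp only [hWζ]
    exact (hy t ht).const_smul k
  let U : ℝ → ℝ := fun t => ‖W t‖ ^ 2 + b * ‖ζ t‖ ^ 2 + δ * ‖W t - ζ t‖ ^ 2 + k * N * ‖η t‖ ^ 2
  let U' : ℝ → ℝ := fun t => 2 * ⟪W t, k • (κ • (W t - ζ t) - A t (W t - φ t))⟫
    + b * (2 * ⟪ζ t, k • κ • (W t - ζ t)⟫) + δ * (2 * ⟪W t - ζ t, k • (-(A t (W t - φ t)))⟫)
    + k * N * (2 * ⟪η t, -g t⟫)
  have hUd : ∀ t, 0 ≤ t → HasDerivAt U (U' t) t := fun t ht =>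
    ((((hWd t ht).norm_sq).add (((hζd t ht).norm_sq).const_mul b)).add
      (((hYd t ht).norm_sq).const_mul δ)).add (((hη t ht).norm_sq).const_mul (k * N))
  have hny : ∀ t, ‖y t‖ ≤ (‖W t‖ + ‖ζ t‖) / k := by
    intro t
    rw [le_div_iff₀ hk0]
    have : ‖W t - ζ t‖ = k * ‖y t‖ := by rw [hWζ, norm_smul, Real.norm_of_nonneg hk0.le]
    have := norm_sub_le (W t) (ζ t)
    linarith
  have hupper : ∀ t, U t ≤ P * ((‖W t‖ + ‖ζ t‖) ^ 2 + ‖η t‖ ^ 2) := by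
    intro t
    have h1 : ‖W t - ζ t‖ ^ 2 ≤ (‖W t‖ + ‖ζ t‖) ^ 2 := by
      gcongr; exact norm_sub_le _ _
    have h2 : ‖W t‖ ^ 2 ≤ (‖W t‖ + ‖ζ t‖) ^ 2 := by
      gcongr; simp
    have h3 : ‖ζ t‖ ^ 2 ≤ (‖W t‖ + ‖ζ t‖) ^ 2 := by
      gcongr; simp
    have h4 : b * ‖ζ t‖ ^ 2 ≤ b * (‖W t‖ + ‖ζ t‖) ^ 2 := by gcongr
    have h5 : δ * ‖W t - ζ t‖ ^ 2 ≤ δ * (‖W t‖ + ‖ζ t‖) ^ 2 := by gcongr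
    have h6 : 0 ≤ k * N * (‖W t‖ + ‖ζ t‖) ^ 2 := by positivity
    have h7 : 0 ≤ (1 + b + 2 * δ) * ‖η t‖ ^ 2 := by positivity
    have h8 : 0 ≤ δ * (‖W t‖ + ‖ζ t‖) ^ 2 := by positivity
    simp only [U]
    rw [hP]
    linarith
  have hdiff : ∀ t, 0 ≤ t → U' t ≤ -(k * d / P) * U t := by
    intro t ht
    have f1 := pi_aux_fast (A t) a B ε ω κ ha hB hε0 hω0 hεB hω1 hω2 hκ0 hκa (hA t ht) (hAB t ht) (W t) (ζ t) (φ t)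
    rw [← hb, ← hδ] at f1
    have f2 := hs k hk (‖W t‖ + ‖ζ t‖) ‖η t‖ (by positivity) (by positivity)
    have f3 := hg t ht
    have f4 : ‖φ t‖ ≤ L * ((‖W t‖ + ‖ζ t‖) / k + ‖η t‖) :=
      (hφ t ht).trans (by gcongr; exact hny t)
    have f5 : 2 * B * (1 + ε * a) * ‖φ t‖ * (‖W t‖ + ‖ζ t‖)
        ≤ 2 * B * (1 + ε * a) * (L * ((‖W t‖ + ‖ζ t‖) / k + ‖η t‖)) * (‖W t‖ + ‖ζ t‖) := by gcongr
    have f6 : L₁ * ‖y t‖ * ‖η t‖ ≤ L₁ * ((‖W t‖ + ‖ζ t‖) / k) * ‖η t‖ := by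
      gcongr; exact hny t
    have f7 : 2 * N * (-⟪η t, g t⟫) ≤ 2 * N * (-ρ * ‖η t‖ ^ 2
        + L₁ * ((‖W t‖ + ‖ζ t‖) / k) * ‖η t‖) := by gcongr; linarith
    have f8 : (ω / 2) / 2 * (‖W t‖ + ‖ζ t‖) ^ 2 ≤ (ω / 2) * (‖W t‖ ^ 2 + ‖ζ t‖ ^ 2) := by
      have : 0 ≤ (ω / 2) * (‖W t‖ - ‖ζ t‖) ^ 2 := by positivity
      linarith
    have f9 : d * (‖W t‖ + ‖ζ t‖) ^ 2 ≤ ω / 2 / 8 * (‖W t‖ + ‖ζ t‖) ^ 2 := by gcongr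
    have f10 : d * ‖η t‖ ^ 2 ≤ N * ρ / 2 * ‖η t‖ ^ 2 := by gcongr
    have e : U' t = k * (2 * ⟪W t, κ • (W t - ζ t) - A t (W t - φ t)⟫
        + 2 * b * ⟪ζ t, κ • (W t - ζ t)⟫ + 2 * δ * ⟪W t - ζ t, -A t (W t - φ t)⟫
        + 2 * N * (-⟪η t, g t⟫)) := by
      simp only [U']
      rw [inner_smul_right _ _ k, inner_smul_right _ _ k, inner_smul_right _ _ k, inner_neg_right (η t)]
      ring
    have f11 : U' t ≤ k * (-d * ((‖W t‖ + ‖ζ t‖) ^ 2 + ‖η t‖ ^ 2)) := by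
      rw [e]; gcongr; linarith
    have f12 : k * d / P * U t ≤ k * d / P * (P * ((‖W t‖ + ‖ζ t‖) ^ 2 + ‖η t‖ ^ 2)) := by
      gcongr; exact hupper t
    have f13 : k * d / P * (P * ((‖W t‖ + ‖ζ t‖) ^ 2 + ‖η t‖ ^ 2))
        = k * (d * ((‖W t‖ + ‖ζ t‖) ^ 2 + ‖η t‖ ^ 2)) := by field_simp
    linarith
  intro t ht
  have hdec := pi_aux_decay U U' _ hUd hdiff t ht
  have hlow : ‖y t‖ ^ 2 + ‖η t‖ ^ 2 + ‖W t‖ ^ 2 ≤ (1 + 2 / k ^ 2 + 1 / (k * N)) * U t := by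
    have g1 : ‖W t‖ ^ 2 + ‖ζ t‖ ^ 2 + k * N * ‖η t‖ ^ 2 ≤ U t := by
      have h3 : ‖ζ t‖ ^ 2 ≤ b * ‖ζ t‖ ^ 2 := le_mul_of_one_le_left (by positivity) hb1
      have h4 : 0 ≤ δ * ‖W t - ζ t‖ ^ 2 := by positivity
      simp only [U]; linarith
    have g2 : ‖y t‖ ^ 2 ≤ 2 / k ^ 2 * (‖W t‖ ^ 2 + ‖ζ t‖ ^ 2) := by
      calc ‖y t‖ ^ 2 ≤ ((‖W t‖ + ‖ζ t‖) / k) ^ 2 := by gcongr; exact hny t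
        _ = 1 / k ^ 2 * (‖W t‖ + ‖ζ t‖) ^ 2 := by field_simp
        _ ≤ 1 / k ^ 2 * (2 * (‖W t‖ ^ 2 + ‖ζ t‖ ^ 2)) := by
          gcongr; nlinarith [sq_nonneg (‖W t‖ - ‖ζ t‖)]
        _ = _ := by ring
    have g0 : 0 ≤ k * N * ‖η t‖ ^ 2 := by positivity
    have g3 : 2 / k ^ 2 * (‖W t‖ ^ 2 + ‖ζ t‖ ^ 2) ≤ 2 / k ^ 2 * U t := by
      gcongr; linarith
    have g4 : ‖η t‖ ^ 2 ≤ 1 / (k * N) * U t := by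
      calc ‖η t‖ ^ 2 = 1 / (k * N) * (k * N * ‖η t‖ ^ 2) := by field_simp
        _ ≤ _ := by gcongr; linarith [sq_nonneg ‖W t‖, sq_nonneg ‖ζ t‖]
    linarith [sq_nonneg ‖ζ t‖]
  have hup0 : U 0 ≤ P * (8 + 2 * k ^ 2) * (‖y 0‖ ^ 2 + ‖η 0‖ ^ 2 + ‖W 0‖ ^ 2) := by
    have g1 : ‖ζ 0‖ ≤ ‖W 0‖ + k * ‖y 0‖ := by
      have := norm_sub_le (W 0) (k • y 0)
      rwa [norm_smul, Real.norm_of_nonneg hk0.le] at this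
    have g2 : (‖W 0‖ + ‖ζ 0‖) ^ 2 ≤ (‖W 0‖ + (‖W 0‖ + k * ‖y 0‖)) ^ 2 := by gcongr
    have g3 : (‖W 0‖ + ‖ζ 0‖) ^ 2 + ‖η 0‖ ^ 2
        ≤ (8 + 2 * k ^ 2) * (‖y 0‖ ^ 2 + ‖η 0‖ ^ 2 + ‖W 0‖ ^ 2) := by
      have t0 := sq_nonneg (2 * ‖W 0‖ - k * ‖y 0‖)
      have t1 : 0 ≤ k ^ 2 * ‖W 0‖ ^ 2 := by positivity
      have t2 : 0 ≤ k ^ 2 * ‖η 0‖ ^ 2 := by positivity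
      linarith [sq_nonneg ‖y 0‖, sq_nonneg ‖η 0‖]
    calc U 0 ≤ P * ((‖W 0‖ + ‖ζ 0‖) ^ 2 + ‖η 0‖ ^ 2) := hupper 0
      _ ≤ P * ((8 + 2 * k ^ 2) * (‖y 0‖ ^ 2 + ‖η 0‖ ^ 2 + ‖W 0‖ ^ 2)) := by gcongr
      _ = _ := by ring
  calc _ ≤ (1 + 2 / k ^ 2 + 1 / (k * N)) * U t := hlow
    _ ≤ (1 + 2 / k ^ 2 + 1 / (k * N)) * (Real.exp (-(k * d / P) * t) *
        (P * (8 + 2 * k ^ 2) * (‖y 0‖ ^ 2 + ‖η 0‖ ^ 2 + ‖W 0‖ ^ 2))) := by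
      gcongr
      exact hdec.trans (by gcongr)
    _ = _ := by ring

/-- The gradient of the restricted cost is the tangential component of the full gradient. -/
lemma pi_aux_grad {E F G : Type*}
    [NormedAddCommGroup E] [InnerProductSpace ℝ E] [CompleteSpace E]
    [NormedAddCommGroup F] [InnerProductSpace ℝ F] [CompleteSpace F]
    [NormedAddCommGroup G] [InnerProductSpace ℝ G] [CompleteSpace G]
    (f : E → ℝ) (h : E → F) (q : E → G) (Ψ : F × G → E)
    (hf : Differentiable ℝ f) (hh : Differentiable ℝ h) (hq : Differentiable ℝ q)
    (hΨ : Differentiable ℝ Ψ)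
    (hleft : ∀ x, Ψ (h x, q x) = x)
    (hright : ∀ p, (h (Ψ p), q (Ψ p)) = p)
    (horth₁ : ∀ x, (fderiv ℝ q x) ∘L (ContinuousLinearMap.adjoint (fderiv ℝ q x))
      = ContinuousLinearMap.id ℝ G)
    (horth₂ : ∀ x, (fderiv ℝ q x) ∘L (ContinuousLinearMap.adjoint (fderiv ℝ h x)) = 0)
    (η : G) :
    gradient (fun η => f (Ψ (0, η))) η = (fderiv ℝ q (Ψ (0, η))) (gradient f (Ψ (0, η))) := by
  let p : G → E := fun η => Ψ (0, η)
  have hp : Differentiable ℝ p := hΨ.comp ((differentiable_const _).prodMk differentiable_id)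
  have hpd := (hp η).hasFDerivAt
  have hfp : HasFDerivAt (fun η => f (Ψ (0, η))) ((fderiv ℝ f (p η)) ∘L (fderiv ℝ p η)) η :=
    ((hf (p η)).hasFDerivAt).comp η hpd
  have hhp : (fderiv ℝ h (p η)) ∘L (fderiv ℝ p η) = 0 := by
    have h1 : HasFDerivAt (h ∘ p) _ η := ((hh (p η)).hasFDerivAt).comp η hpd
    have h2 : h ∘ p = fun _ => 0 := by
      funext u; exact congrArg Prod.fst (hright (0, u))
    rw [h2] at h1
    exact h1.unique (hasFDerivAt_const _ _)
  have hqp : (fderiv ℝ q (p η)) ∘L (fderiv ℝ p η) = ContinuousLinearMap.id ℝ G := by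
    have h1 : HasFDerivAt (q ∘ p) _ η := ((hq (p η)).hasFDerivAt).comp η hpd
    have h2 : q ∘ p = id := by
      funext u; exact congrArg Prod.snd (hright (0, u))
    rw [h2] at h1
    exact h1.unique (hasFDerivAt_id _)
  have hinj : ∀ e : E, fderiv ℝ h (p η) e = 0 → fderiv ℝ q (p η) e = 0 → e = 0 := by
    intro e he1 he2
    have h1 : HasFDerivAt (Ψ ∘ fun x => (h x, q x)) _ (p η) :=
      ((hΨ (h (p η), q (p η))).hasFDerivAt).comp (p η)
        (((hh (p η)).hasFDerivAt).prodMk ((hq (p η)).hasFDerivAt))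
    have h2 : (Ψ ∘ fun x => (h x, q x)) = id := by funext u; exact hleft u
    rw [h2] at h1
    have h3 := DFunLike.congr_fun (h1.unique (hasFDerivAt_id _)) e
    simp only [ContinuousLinearMap.comp_apply, ContinuousLinearMap.prod_apply, he1, he2,
      ContinuousLinearMap.id_apply] at h3
    rw [← h3]
    exact map_zero _
  have horth₃ : (fderiv ℝ h (p η)) ∘L (ContinuousLinearMap.adjoint (fderiv ℝ q (p η))) = 0 := by
    have := congrArg ContinuousLinearMap.adjoint (horth₂ (p η))
    simpa [ContinuousLinearMap.adjoint_comp] using this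
  have key : ∀ v, fderiv ℝ p η v = ContinuousLinearMap.adjoint (fderiv ℝ q (p η)) v := by
    intro v
    rw [← sub_eq_zero]
    apply hinj
    · have a1 := DFunLike.congr_fun hhp v
      have a2 := DFunLike.congr_fun horth₃ v
      simp only [ContinuousLinearMap.comp_apply, ContinuousLinearMap.zero_apply] at a1 a2
      rw [map_sub, a1, a2, sub_zero]
    · have a1 := DFunLike.congr_fun hqp v
      have a2 := DFunLike.congr_fun (horth₁ (p η)) v
      simp only [ContinuousLinearMap.comp_apply, ContinuousLinearMap.id_apply] at a1 a2
      rw [map_sub, a1, a2, sub_self]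
  apply ext_inner_right ℝ
  intro v
  have g1 : ⟪gradient (fun η => f (Ψ (0, η))) η, v⟫ = fderiv ℝ f (p η) (fderiv ℝ p η v) := by
    rw [gradient, InnerProductSpace.toDual_symm_apply, hfp.fderiv]; rfl
  have g2 : ⟪gradient f (p η), fderiv ℝ p η v⟫ = fderiv ℝ f (p η) (fderiv ℝ p η v) := by
    rw [gradient, InnerProductSpace.toDual_symm_apply]
  rw [g1, ← g2, key, ContinuousLinearMap.adjoint_inner_right]

set_option maxHeartbeats 2000000 in
/-- Theorem 3: Global exponential stability of the PI dynamics.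
There exists a gain threshold `k_p* > 0` such that for all `k_p > k_p*` and
`0 < k_i < m̲ k_p²`, every solution of the PI dynamics converges globally
exponentially to `(x*, λ*)` in the ℓ² product norm. -/
theorem pi_dynamics_global_exponential_stability
    (n m : ℕ) (hm : 1 ≤ m) (hmn : m < n)
    (f : EuclideanSpace ℝ (Fin n) → ℝ)
    (h : EuclideanSpace ℝ (Fin n) → EuclideanSpace ℝ (Fin m))
    (q : EuclideanSpace ℝ (Fin n) → EuclideanSpace ℝ (Fin (n - m)))
    (Ψ : EuclideanSpace ℝ (Fin m) × EuclideanSpace ℝ (Fin (n - m)) → EuclideanSpace ℝ (Fin n))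
    (hf : ContDiff ℝ 1 f) (hh : ContDiff ℝ 1 h) (hq : ContDiff ℝ 1 q)
    (hΨ : ContDiff ℝ 1 Ψ)
    (hleft : ∀ x, Ψ (h x, q x) = x)
    (hright : ∀ p, (h (Ψ p), q (Ψ p)) = p)
    (horth₁ : ∀ x, (fderiv ℝ q x) ∘L (ContinuousLinearMap.adjoint (fderiv ℝ q x))
      = ContinuousLinearMap.id ℝ (EuclideanSpace ℝ (Fin (n - m))))
    (horth₂ : ∀ x, (fderiv ℝ q x) ∘L (ContinuousLinearMap.adjoint (fderiv ℝ h x)) = 0)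
    -- (i) uniform full rank and uniform upper bound on the Gram map
    (mlow mup : ℝ) (hmlow : 0 < mlow)
    (hcoerc : ∀ (x : EuclideanSpace ℝ (Fin n)) (v : EuclideanSpace ℝ (Fin m)),
      ⟪(ContinuousLinearMap.adjoint (fderiv ℝ h x)) v,
        (ContinuousLinearMap.adjoint (fderiv ℝ h x)) v⟫ ≥ mlow * ‖v‖ ^ 2)
    (hinv : ∀ x, IsUnit ((fderiv ℝ h x) ∘L (ContinuousLinearMap.adjoint (fderiv ℝ h x))))
    (hmup : ∀ x, ‖(fderiv ℝ h x) ∘L (ContinuousLinearMap.adjoint (fderiv ℝ h x))‖ ≤ mup)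
    -- (ii) strong convexity of f̃ = f ∘ p on the constraint manifold
    (ρη : ℝ) (hρη : 0 < ρη)
    (hconv : ∀ u v : EuclideanSpace ℝ (Fin (n - m)),
      f (Ψ (0, v)) ≥ f (Ψ (0, u)) + ⟪gradient (fun η => f (Ψ (0, η))) u, v - u⟫
        + (ρη / 2) * ‖v - u‖ ^ 2)
    (ηstar : EuclideanSpace ℝ (Fin (n - m)))
    (hcrit : gradient (fun η => f (Ψ (0, η))) ηstar = 0)
    (xstar : EuclideanSpace ℝ (Fin n)) (hxstar : xstar = Ψ (0, ηstar))
    -- (iii) global Lipschitz continuity of Φ and Φ⁻¹ (ℓ² product norm)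
    (LΦ LΨ : ℝ)
    (hΦLip : ∀ x x' : EuclideanSpace ℝ (Fin n),
      Real.sqrt (‖h x - h x'‖ ^ 2 + ‖q x - q x'‖ ^ 2) ≤ LΦ * ‖x - x'‖)
    (hΨLip : ∀ p p' : EuclideanSpace ℝ (Fin m) × EuclideanSpace ℝ (Fin (n - m)),
      ‖Ψ p - Ψ p'‖ ≤ LΨ * Real.sqrt (‖p.1 - p'.1‖ ^ 2 + ‖p.2 - p'.2‖ ^ 2))
    -- (iv) transverse Lipschitz bound
    (L₁ : ℝ) (hL₁ : 0 < L₁)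
    (htrans : ∀ (y : EuclideanSpace ℝ (Fin m)) (η : EuclideanSpace ℝ (Fin (n - m))),
      ‖(fderiv ℝ q (Ψ (y, η))) (gradient f (Ψ (y, η)))
        - (fderiv ℝ q (Ψ (0, η))) (gradient f (Ψ (0, η)))‖ ≤ L₁ * ‖y‖)
    -- (v) the least-squares multiplier map φ is globally Lipschitz with constant L₂
    (L₂ : ℝ)
    (hφLip : ∀ x₁ x₂ : EuclideanSpace ℝ (Fin n),
      ‖(-(Ring.inverse ((fderiv ℝ h x₁) ∘L (ContinuousLinearMap.adjoint (fderiv ℝ h x₁)))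
            ((fderiv ℝ h x₁) (gradient f x₁))))
        - (-(Ring.inverse ((fderiv ℝ h x₂) ∘L (ContinuousLinearMap.adjoint (fderiv ℝ h x₂)))
            ((fderiv ℝ h x₂) (gradient f x₂))))‖ ≤ L₂ * ‖x₁ - x₂‖)
    (lamstar : EuclideanSpace ℝ (Fin m))
    (hlamstar : lamstar =
      -(Ring.inverse ((fderiv ℝ h xstar) ∘L (ContinuousLinearMap.adjoint (fderiv ℝ h xstar)))
        ((fderiv ℝ h xstar) (gradient f xstar)))) :
    -- conclusion
    ∃ kpstar : ℝ, 0 < kpstar ∧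
      ∀ kp ki : ℝ, kpstar < kp → 0 < ki → ki < mlow * kp ^ 2 →
        ∃ cπ ρπ : ℝ, 0 < cπ ∧ 0 < ρπ ∧
          ∀ (x : ℝ → EuclideanSpace ℝ (Fin n)) (z : ℝ → EuclideanSpace ℝ (Fin m)),
            (∀ t, 0 ≤ t → HasDerivAt x
              (-gradient f (x t) - (ContinuousLinearMap.adjoint (fderiv ℝ h (x t)))
                (kp • h (x t) + ki • z t)) t) →
            (∀ t, 0 ≤ t → HasDerivAt z (h (x t)) t) →
            ∀ t, 0 ≤ t →
              Real.sqrt (‖x t - xstar‖ ^ 2 + ‖(kp • h (x t) + ki • z t) - lamstar‖ ^ 2)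
                ≤ cπ * Real.exp (-ρπ * t) *
                  Real.sqrt (‖x 0 - xstar‖ ^ 2 + ‖(kp • h (x 0) + ki • z 0) - lamstar‖ ^ 2) := by
  have hfd : Differentiable ℝ f := hf.differentiable (by norm_num)
  have hhd : Differentiable ℝ h := hh.differentiable (by norm_num)
  have hqd : Differentiable ℝ q := hq.differentiable (by norm_num)
  have hΨd : Differentiable ℝ Ψ := hΨ.differentiable (by norm_num)
  have hgrad := pi_aux_grad f h q Ψ hfd hhd hqd hΨd hleft hright horth₁ horth₂
  have hhs : h xstar = 0 := by rw [hxstar]; exact congrArg Prod.fst (hright (0, ηstar))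
  have hqs : q xstar = ηstar := by rw [hxstar]; exact congrArg Prod.snd (hright (0, ηstar))
  obtain ⟨G, hG⟩ : ∃ G : EuclideanSpace ℝ (Fin n) →
      EuclideanSpace ℝ (Fin m) →L[ℝ] EuclideanSpace ℝ (Fin m),
      ∀ x, G x = (fderiv ℝ h x) ∘L (ContinuousLinearMap.adjoint (fderiv ℝ h x)) :=
    ⟨fun x => _, fun _ => rfl⟩
  simp only [← hG] at hinv hmup hφLip hlamstar
  have hGa : ∀ x v, mlow * ‖v‖ ^ 2 ≤ ⟪v, G x v⟫ := by
    intro x v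
    have := hcoerc x v
    rw [ContinuousLinearMap.adjoint_inner_left] at this
    rw [hG]
    exact this
  have hGB : ∀ x v, ‖G x v‖ ≤ (|mup| + 1) * ‖v‖ := by
    intro x v
    refine (G x).le_of_opNorm_le ((hmup x).trans ?_) v
    linarith [le_abs_self mup]
  obtain ⟨φ, hφ⟩ : ∃ φ : EuclideanSpace ℝ (Fin n) → EuclideanSpace ℝ (Fin m),
      ∀ x, φ x = -(Ring.inverse (G x) ((fderiv ℝ h x) (gradient f x))) := ⟨fun x => _, fun _ => rfl⟩
  simp only [← hφ] at hφLip hlamstar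
  have hGφ : ∀ x, G x (φ x) = -(fderiv ℝ h x) (gradient f x) := by
    intro x
    have := Ring.mul_inverse_cancel _ (hinv x)
    have := DFunLike.congr_fun this ((fderiv ℝ h x) (gradient f x))
    rw [hφ, map_neg]
    exact congrArg Neg.neg this
  have hΨb : ∀ x, ‖x - xstar‖ ≤ |LΨ| * Real.sqrt (‖h x‖ ^ 2 + ‖q x - ηstar‖ ^ 2) := by
    intro x
    have := hΨLip (h x, q x) (0, ηstar)
    rw [hleft, ← hxstar] at this
    simp only [sub_zero] at this
    exact this.trans (by gcongr; exact le_abs_self _)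
  have hΦb : ∀ x, ‖h x‖ ^ 2 + ‖q x - ηstar‖ ^ 2 ≤ LΦ ^ 2 * ‖x - xstar‖ ^ 2 := by
    intro x
    have := hΦLip x xstar
    rw [hhs, hqs, sub_zero] at this
    rw [← mul_pow, ← Real.sq_sqrt (by positivity : (0:ℝ) ≤ ‖h x‖ ^ 2 + ‖q x - ηstar‖ ^ 2)]
    gcongr
  have hφb : ∀ x, ‖φ x - lamstar‖ ≤ (|L₂| * |LΨ|) * (‖h x‖ + ‖q x - ηstar‖) := by
    intro x
    rw [hlamstar]
    have h1 : Real.sqrt (‖h x‖ ^ 2 + ‖q x - ηstar‖ ^ 2) ≤ ‖h x‖ + ‖q x - ηstar‖ := by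
      rw [Real.sqrt_le_left (by positivity)]
      have : 0 ≤ ‖h x‖ * ‖q x - ηstar‖ := by positivity
      linarith
    calc _ ≤ L₂ * ‖x - xstar‖ := hφLip x xstar
      _ ≤ |L₂| * ‖x - xstar‖ := by gcongr; exact le_abs_self _
      _ ≤ |L₂| * (|LΨ| * (‖h x‖ + ‖q x - ηstar‖)) := by
        gcongr; exact (hΨb x).trans (by gcongr)
      _ = _ := by ring
  have hmono : ∀ u, ρη * ‖u - ηstar‖ ^ 2
      ≤ ⟪u - ηstar, gradient (fun η => f (Ψ (0, η))) u⟫ := by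
    intro u
    have h1 := hconv u ηstar
    have h2 := hconv ηstar u
    rw [hcrit, inner_zero_left] at h2
    rw [← neg_sub u ηstar, inner_neg_right, norm_neg, real_inner_comm] at h1
    linarith
  have hgb : ∀ x, ρη * ‖q x - ηstar‖ ^ 2 - L₁ * ‖h x‖ * ‖q x - ηstar‖
      ≤ ⟪q x - ηstar, (fderiv ℝ q x) (gradient f x)⟫ := by
    intro x
    have h1 := hmono (q x)
    have h2 := htrans (h x) (q x)
    rw [hleft, ← hgrad] at h2
    have h3 := real_inner_le_norm (q x - ηstar)
      (-((fderiv ℝ q x) (gradient f x) - gradient (fun η => f (Ψ (0, η))) (q x)))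
    rw [norm_neg, inner_neg_right, inner_sub_right] at h3
    have h4 := mul_le_mul_of_nonneg_left h2 (norm_nonneg (q x - ηstar))
    linarith
  obtain ⟨kps, hkps, hcore⟩ := pi_aux_core (F := EuclideanSpace ℝ (Fin m))
    (G := EuclideanSpace ℝ (Fin (n - m))) mlow (|mup| + 1) ρη L₁ (|L₂| * |LΨ|)
    hmlow (by positivity) hρη hL₁ (by positivity)
  refine ⟨kps, hkps, fun kp ki hkp hki hkik => ?_⟩
  obtain ⟨c₁, r, hc₁, hr, hall⟩ := hcore kp ki hkp hki hkik
  refine ⟨Real.sqrt ((LΨ ^ 2 + 1) * c₁ * (LΦ ^ 2 + 1)), r / 2, by positivity, by positivity, ?_⟩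
  intro x z hx hz t ht
  have hyd : ∀ t, 0 ≤ t → HasDerivAt (fun t => h (x t))
      (-(G (x t) (((kp • h (x t) + ki • z t) - lamstar) - (φ (x t) - lamstar)))) t := by
    intro t ht
    have := ((hhd (x t)).hasFDerivAt).comp_hasDerivAt t (hx t ht)
    refine HasDerivAt.congr_deriv this ?_
    rw [sub_sub_sub_cancel_right, map_sub (G (x t)), hGφ, map_sub, map_neg, hG]
    simp only [ContinuousLinearMap.comp_apply]
    abel
  have hWd : ∀ t, 0 ≤ t → HasDerivAt (fun t => (kp • h (x t) + ki • z t) - lamstar)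
      (kp • (-(G (x t) (((kp • h (x t) + ki • z t) - lamstar) - (φ (x t) - lamstar))))
        + ki • h (x t)) t := by
    intro t ht
    exact (((hyd t ht).const_smul kp).add ((hz t ht).const_smul ki)).sub_const lamstar
  have hηd : ∀ t, 0 ≤ t → HasDerivAt (fun t => q (x t) - ηstar)
      (-((fderiv ℝ q (x t)) (gradient f (x t)))) t := by
    intro t ht
    have := (((hqd (x t)).hasFDerivAt).comp_hasDerivAt t (hx t ht)).sub_const ηstar
    refine HasDerivAt.congr_deriv this ?_
    have h0 := DFunLike.congr_fun (horth₂ (x t)) (kp • h (x t) + ki • z t)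
    simp only [ContinuousLinearMap.comp_apply, ContinuousLinearMap.zero_apply] at h0
    rw [map_sub, map_neg, h0, sub_zero]
  have main := hall (fun t => G (x t)) (fun t => h (x t))
    (fun t => (kp • h (x t) + ki • z t) - lamstar) (fun t => φ (x t) - lamstar)
    (fun t => q (x t) - ηstar) (fun t => (fderiv ℝ q (x t)) (gradient f (x t)))
    (fun t _ => hGa (x t)) (fun t _ => hGB (x t)) hyd hWd hηd
    (fun t _ => hφb (x t)) (fun t _ => hgb (x t)) t ht
  have low : ‖x t - xstar‖ ^ 2 ≤ LΨ ^ 2 * (‖h (x t)‖ ^ 2 + ‖q (x t) - ηstar‖ ^ 2) := by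
    have h1 := pow_le_pow_left₀ (norm_nonneg _) (hΨb (x t)) 2
    rwa [mul_pow, sq_abs, Real.sq_sqrt (by positivity)] at h1
  have up := hΦb (x 0)
  generalize hw : ‖(kp • h (x t) + ki • z t) - lamstar‖ = w at *
  generalize hw0 : ‖(kp • h (x 0) + ki • z 0) - lamstar‖ = w0 at *
  have hexp : Real.exp (-r * t) = Real.exp (-(r / 2) * t) ^ 2 := by
    rw [← Real.exp_nat_mul]; congr 1; push_cast; ring
  have s1 : ‖x t - xstar‖ ^ 2 + w ^ 2
      ≤ (LΨ ^ 2 + 1) * (‖h (x t)‖ ^ 2 + ‖q (x t) - ηstar‖ ^ 2 + w ^ 2) := by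
    have : 0 ≤ LΨ ^ 2 * w ^ 2 := by positivity
    linarith [sq_nonneg ‖h (x t)‖, sq_nonneg ‖q (x t) - ηstar‖]
  have s2 : ‖h (x 0)‖ ^ 2 + ‖q (x 0) - ηstar‖ ^ 2 + w0 ^ 2
      ≤ (LΦ ^ 2 + 1) * (‖x 0 - xstar‖ ^ 2 + w0 ^ 2) := by
    have : 0 ≤ LΦ ^ 2 * w0 ^ 2 := by positivity
    linarith [sq_nonneg ‖x 0 - xstar‖]
  rw [Real.sqrt_le_left (by positivity), mul_pow, mul_pow, Real.sq_sqrt (by positivity),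
    Real.sq_sqrt (by positivity), ← hexp]
  calc _ ≤ (LΨ ^ 2 + 1) * (‖h (x t)‖ ^ 2 + ‖q (x t) - ηstar‖ ^ 2 + w ^ 2) := s1
    _ ≤ (LΨ ^ 2 + 1) * (c₁ * Real.exp (-r * t) *
        ((LΦ ^ 2 + 1) * (‖x 0 - xstar‖ ^ 2 + w0 ^ 2))) := by
      gcongr
      exact main.trans (by gcongr)
    _ = _ := by ring
end

section
/- Explicit gain threshold for the PI dynamics (Theorem 4). In the setting of Theorem 3 (hypotheses (i)–(v) with constants m̲, m̄, ρ_η, L_Φ, L_Ψ, L₁, L₂, and λ* = φ(x*)), set L_r = m̄ L₂ L_Ψ and κ = 12 L_r/m̲ + 64 L_r²/m̲² + 8 L₁² L_r/(ρ_η² m̲) + 128 L₁² L_r²/(ρ_η² m̲²). Then for every k_p and k_i with k_p ≥ max{1, 2k_i/(k_p m̲), κ}, 0 < k_i ≤ m̲ k_p²/2, there exist c_π > 0 and ρ_π > 0 such that every pair of differentiable curves x : [0,∞) → E, z : [0,∞) → F₁ satisfying x'(t) = −∇f(x(t)) − Dh(x(t))†( k_p h(x(t)) + k_i z(t) ) and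 z'(t) = h(x(t)) obeys, with λ(t) = k_p h(x(t)) + k_i z(t), the bound ‖(x(t) − x*, λ(t) − λ*)‖ ≤ c_π e^{−ρ_π t} ‖(x(0) − x*, λ(0) − λ*)‖ for all t ≥ 0. -/
open scoped RealInnerProductSpace

lemma pi_bracket (W Y F ε δ Q : ℝ) (hW : 0 ≤ W) (hY : 0 ≤ Y)
    (hε : ε ≤ 1 / 12) (hδ2 : δ ^ 2 ≤ 1 / 384) (hQ : Q ≤ 1 / 2) :
    -2 * W ^ 2 + 2 * ε * W * Y + 2 * δ * W * F + (1 + 2 * Q) * W * Y - Y ^ 2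
      + (1 / 6) * (-F ^ 2 + Y * F)
      ≤ -(W ^ 2 / 2 + Y ^ 2 / 12 + F ^ 2 / 24) := by
  have hWY : 0 ≤ W * Y := mul_nonneg hW hY
  have h1 : ε * (W * Y) ≤ 1 / 12 * (W * Y) := mul_le_mul_of_nonneg_right hε hWY
  have h2 : Q * (W * Y) ≤ 1 / 2 * (W * Y) := mul_le_mul_of_nonneg_right hQ hWY
  have h3 : δ ^ 2 * W ^ 2 ≤ 1 / 384 * W ^ 2 := mul_le_mul_of_nonneg_right hδ2 (sq_nonneg _)
  have h4 : 2 * δ * W * F ≤ F ^ 2 / 24 + 24 * (δ ^ 2 * W ^ 2) := by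
    nlinarith [sq_nonneg (F - 24 * (δ * W))]
  nlinarith [sq_nonneg (Y - F), sq_nonneg (W - Y), sq_nonneg (4 * W - 3 * Y)]

lemma pi_scalar (m kp ki ρ L1 L W y e : ℝ) (hm : 0 < m) (hkp : 0 < kp) (hki : 0 < ki)
    (hρ : 0 < ρ) (hL1 : 0 < L1) (hW : 0 ≤ W) (hy : 0 ≤ y)
    (h12 : 12 * (L / m) ≤ kp) (h384 : 384 * (L / m) ^ 2 * (L1 ^ 2 / ρ ^ 2) ≤ kp ^ 2)
    (hkk : ki ≤ m * kp ^ 2 / 2) :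
    (2 * ki / (m * kp ^ 2)) * (-(kp * m * W ^ 2) + kp * W * (L * (y + e)) + ki * W * y)
      + (ki * kp * ρ / (6 * L1 ^ 2)) * (-(ρ * e ^ 2) + L1 * y * e) + ki * (W * y - kp * y ^ 2)
      ≤ -((ki / kp) * (W ^ 2 / 2 + (kp * y) ^ 2 / 12 + (kp * e * ρ / L1) ^ 2 / 24)) := by
  have hb := pi_bracket W (kp * y) (kp * e * ρ / L1) (L / m / kp) (L / m / kp * (L1 / ρ))
    (ki / (m * kp ^ 2)) hW (by positivity)
    (by rw [div_le_iff₀ hkp]; linarith)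
    (by
      have : (L / m / kp * (L1 / ρ)) ^ 2 = (L / m) ^ 2 * (L1 ^ 2 / ρ ^ 2) / kp ^ 2 := by
        field_simp
      rw [this, div_le_iff₀ (by positivity)]; linarith)
    (by rw [div_le_iff₀ (by positivity)]; linarith)
  have h2 := mul_le_mul_of_nonneg_left hb (div_pos hki hkp).le
  refine le_trans (le_of_eq ?_) (h2.trans (le_of_eq (by ring)))
  field_simp
  ring

lemma pi_gronwall (V V' : ℝ → ℝ) (c : ℝ) (hV : ∀ t, 0 ≤ t → HasDerivAt V (V' t) t)
    (hle : ∀ t, 0 ≤ t → V' t ≤ -c * V t) (t : ℝ) (ht : 0 ≤ t) :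
    V t ≤ V 0 * Real.exp (-c * t) := by
  have hd : ∀ t, 0 ≤ t → HasDerivAt (fun s => V s * Real.exp (c * s))
      (V' t * Real.exp (c * t) + V t * (Real.exp (c * t) * (c * 1))) t := fun t ht =>
    (hV t ht).mul (((hasDerivAt_id t).const_mul c).exp)
  have hanti : AntitoneOn (fun s => V s * Real.exp (c * s)) (Set.Ici 0) := by
    apply antitoneOn_of_deriv_nonpos (convex_Ici 0)
    · exact fun s hs => (hd s hs).continuousAt.continuousWithinAt
    · intro s hs
      rw [interior_Ici] at hs
      exact (hd s (le_of_lt hs)).differentiableAt.differentiableWithinAt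
    · intro s hs
      rw [interior_Ici] at hs
      have hs' : 0 ≤ s := le_of_lt hs
      rw [(hd s hs').deriv]
      have := mul_le_mul_of_nonneg_right (hle s hs') (Real.exp_pos (c * s)).le
      linarith
  have h1 := hanti (Set.mem_Ici.2 le_rfl) (Set.mem_Ici.2 ht) ht
  simp only [mul_zero, Real.exp_zero, mul_one] at h1
  have h2 := mul_le_mul_of_nonneg_right h1 (Real.exp_pos (-c * t)).le
  have h3 : Real.exp (c * t) * Real.exp (-c * t) = 1 := by
    rw [← Real.exp_add]; simp
  rw [mul_assoc, h3, mul_one] at h2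
  exact h2

lemma pi_deriv_bound (A B kp ki m ρ L L1 a b c W y e d c2 V : ℝ) (hA : 0 < A) (hB : 0 < B)
    (hkp : 0 < kp) (hki : 0 < ki) (hc2 : 0 < c2) (hd0 : 0 < d)
    (i1 : a ≤ -(m * W ^ 2) + W * (L * (y + e)))
    (i2 : c ≤ -(ρ * e ^ 2) + L1 * y * e) (i3 : b ≤ W * y)
    (i4 : V ≤ c2 * (W ^ 2 + y ^ 2 + e ^ 2))
    (i5 : A * (-(kp * m * W ^ 2) + kp * W * (L * (y + e)) + ki * W * y)
      + B * (-(ρ * e ^ 2) + L1 * y * e) + ki * (W * y - kp * y ^ 2)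
      ≤ -(d * (W ^ 2 + y ^ 2 + e ^ 2))) :
    A * (2 * (kp * a + ki * b)) + B * (2 * c) + 2 * (ki * (b - kp * y ^ 2))
      ≤ -(2 * d / c2) * V := by
  have j1 := mul_le_mul_of_nonneg_left i1 (mul_pos hA hkp).le
  have j2 := mul_le_mul_of_nonneg_left i2 hB.le
  have j3 := mul_le_mul_of_nonneg_left i3 (mul_pos hA hki).le
  have j3' := mul_le_mul_of_nonneg_left i3 hki.le
  have j4 := mul_le_mul_of_nonneg_left i4 (div_pos hd0 hc2).le
  have j5 : d / c2 * (c2 * (W ^ 2 + y ^ 2 + e ^ 2)) = d * (W ^ 2 + y ^ 2 + e ^ 2) := by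
    field_simp
  have j6 : -(2 * d / c2) * V = -2 * (d / c2 * V) := by ring
  rw [j6]
  rw [j5] at j4
  linarith

lemma pi_final (N0 N1 S0 S1 V0 V1 K1 K2 c1 c2 r : ℝ) (t : ℝ) (hK1 : 0 < K1) (hK2 : 0 < K2)
    (hc1 : 0 < c1) (hc2 : 0 < c2) (h1 : N1 ≤ K1 * S1) (h2 : S1 ≤ c1 * V1)
    (h3 : V1 ≤ V0 * Real.exp (-(2 * r) * t)) (h4 : V0 ≤ c2 * S0) (h5 : S0 ≤ K2 * N0) :
    Real.sqrt N1 ≤ Real.sqrt (K1 * c1 * c2 * K2) * Real.exp (-r * t) * Real.sqrt N0 := by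
  have e1 : Real.exp (-(2 * r) * t) = Real.exp (-r * t) ^ 2 := by
    rw [← Real.exp_nat_mul]; congr 1; push_cast; ring
  have hE := Real.exp_pos (-r * t)
  set X := Real.exp (-r * t)
  rw [e1] at h3
  have h6 : V0 ≤ c2 * (K2 * N0) := h4.trans (by gcongr)
  have h7 : N1 ≤ K1 * (c1 * (c2 * (K2 * N0) * X ^ 2)) := by
    refine h1.trans (mul_le_mul_of_nonneg_left (h2.trans (mul_le_mul_of_nonneg_left
      (h3.trans ?_) hc1.le)) hK1.le)
    exact mul_le_mul_of_nonneg_right h6 (sq_nonneg _)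
  have h8 : K1 * (c1 * (c2 * (K2 * N0) * X ^ 2)) = (K1 * c1 * c2 * K2) * X ^ 2 * N0 := by ring
  rw [h8] at h7
  refine (Real.sqrt_le_sqrt h7).trans (le_of_eq ?_)
  rw [Real.sqrt_mul (by positivity), Real.sqrt_mul (by positivity), Real.sqrt_sq hE.le]

lemma pi_gradient {E F₁ F₂ : Type*} [NormedAddCommGroup E] [InnerProductSpace ℝ E]
    [CompleteSpace E] [NormedAddCommGroup F₁] [InnerProductSpace ℝ F₁] [CompleteSpace F₁]
    [NormedAddCommGroup F₂] [InnerProductSpace ℝ F₂] [CompleteSpace F₂]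
    (f : E → ℝ) (h : E → F₁) (q : E → F₂) (Ψ : F₁ × F₂ → E)
    (hf : Differentiable ℝ f) (hh : Differentiable ℝ h) (hq : Differentiable ℝ q)
    (hΨ : Differentiable ℝ Ψ)
    (hleft : ∀ x, Ψ (h x, q x) = x)
    (hright : ∀ p, (h (Ψ p), q (Ψ p)) = p)
    (horth₁ : ∀ x, (fderiv ℝ q x) ∘L (ContinuousLinearMap.adjoint (fderiv ℝ q x))
      = ContinuousLinearMap.id ℝ F₂)
    (horth₂ : ∀ x, (fderiv ℝ q x) ∘L (ContinuousLinearMap.adjoint (fderiv ℝ h x)) = 0)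
    (η : F₂) :
    gradient (fun η => f (Ψ (0, η))) η = (fderiv ℝ q (Ψ (0, η))) (gradient f (Ψ (0, η))) := by
  set p : F₁ × F₂ := (0, η) with hp
  set x := Ψ p with hx
  have hpx : (h x, q x) = p := hright p
  have hD1 : HasFDerivAt (fun z => Ψ (h z, q z))
      ((fderiv ℝ Ψ p) ∘L ((fderiv ℝ h x).prod (fderiv ℝ q x))) x := by
    have h1 : HasFDerivAt Ψ (fderiv ℝ Ψ p) (h x, q x) := by
      rw [hpx]; exact (hΨ p).hasFDerivAt
    exact h1.comp x ((hh x).hasFDerivAt.prodMk (hq x).hasFDerivAt)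
  have hid1 : (fderiv ℝ Ψ p) ∘L ((fderiv ℝ h x).prod (fderiv ℝ q x))
      = ContinuousLinearMap.id ℝ E := by
    apply hD1.unique
    have : (fun z => Ψ (h z, q z)) = id := funext hleft
    rw [this]; exact hasFDerivAt_id x
  have key : ∀ v : F₂, fderiv ℝ Ψ p (0, v) = ContinuousLinearMap.adjoint (fderiv ℝ q x) v := by
    intro v
    have hhq : (fderiv ℝ h x) (ContinuousLinearMap.adjoint (fderiv ℝ q x) v) = 0 := by
      have := congrArg ContinuousLinearMap.adjoint (horth₂ x)
      rw [ContinuousLinearMap.adjoint_comp, ContinuousLinearMap.adjoint_adjoint, map_zero] at this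
      exact congrArg (fun T => T v) this
    have hqq : (fderiv ℝ q x) (ContinuousLinearMap.adjoint (fderiv ℝ q x) v) = v :=
      congrArg (fun T => T v) (horth₁ x)
    have := congrArg (fun T => T (ContinuousLinearMap.adjoint (fderiv ℝ q x) v)) hid1
    simp only [ContinuousLinearMap.comp_apply, ContinuousLinearMap.prod_apply, hhq, hqq,
      ContinuousLinearMap.id_apply] at this
    exact this
  have hg : HasGradientAt (fun η => f (Ψ (0, η))) ((fderiv ℝ q x) (gradient f x)) η := by
    rw [hasGradientAt_iff_hasFDerivAt]
    have h1 : HasFDerivAt (fun η : F₂ => ((0 : F₁), η))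
        ((0 : F₂ →L[ℝ] F₁).prod (ContinuousLinearMap.id ℝ F₂)) η :=
      (hasFDerivAt_const _ _).prodMk (hasFDerivAt_id η)
    have h2 : HasFDerivAt Ψ (fderiv ℝ Ψ p) ((0 : F₁), η) := (hΨ p).hasFDerivAt
    have h3 : HasFDerivAt f (InnerProductSpace.toDual ℝ E (gradient f x)) (Ψ (0, η)) :=
      (hf x).hasGradientAt.hasFDerivAt
    have h4 := h3.comp η (h2.comp η h1)
    refine h4.congr_fderiv ?_
    apply ContinuousLinearMap.ext
    intro v
    change ⟪gradient f x, fderiv ℝ Ψ p (0, v)⟫ = ⟪(fderiv ℝ q x) (gradient f x), v⟫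
    rw [key v, ContinuousLinearMap.adjoint_inner_right]
  exact hg.gradient

set_option maxHeartbeats 4000000 in
/-- Theorem 4: Explicit gain threshold for the PI dynamics.
With `L_r = m̄ L₂ L_Ψ` and
`κ = 12 L_r/m̲ + 64 L_r²/m̲² + 8 L₁² L_r/(ρ_η² m̲) + 128 L₁² L_r²/(ρ_η² m̲²)`,
for every `k_p ≥ max {1, 2k_i/(k_p m̲), κ}` and `0 < k_i ≤ m̲ k_p²/2`, the PI dynamics
is globally exponentially stable at `(x*, λ*)`. -/
theorem pi_dynamics_explicit_gain_threshold
    (n m : ℕ) (hm : 1 ≤ m) (hmn : m < n)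
    (f : EuclideanSpace ℝ (Fin n) → ℝ)
    (h : EuclideanSpace ℝ (Fin n) → EuclideanSpace ℝ (Fin m))
    (q : EuclideanSpace ℝ (Fin n) → EuclideanSpace ℝ (Fin (n - m)))
    (Ψ : EuclideanSpace ℝ (Fin m) × EuclideanSpace ℝ (Fin (n - m)) → EuclideanSpace ℝ (Fin n))
    (hf : ContDiff ℝ 1 f) (hh : ContDiff ℝ 1 h) (hq : ContDiff ℝ 1 q)
    (hΨ : ContDiff ℝ 1 Ψ)
    (hleft : ∀ x, Ψ (h x, q x) = x)
    (hright : ∀ p, (h (Ψ p), q (Ψ p)) = p)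
    (horth₁ : ∀ x, (fderiv ℝ q x) ∘L (ContinuousLinearMap.adjoint (fderiv ℝ q x))
      = ContinuousLinearMap.id ℝ (EuclideanSpace ℝ (Fin (n - m))))
    (horth₂ : ∀ x, (fderiv ℝ q x) ∘L (ContinuousLinearMap.adjoint (fderiv ℝ h x)) = 0)
    -- (i) uniform full rank and uniform upper bound on the Gram map
    (mlow mup : ℝ) (hmlow : 0 < mlow)
    (hcoerc : ∀ (x : EuclideanSpace ℝ (Fin n)) (v : EuclideanSpace ℝ (Fin m)),
      ⟪(ContinuousLinearMap.adjoint (fderiv ℝ h x)) v,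
        (ContinuousLinearMap.adjoint (fderiv ℝ h x)) v⟫ ≥ mlow * ‖v‖ ^ 2)
    (hinv : ∀ x, IsUnit ((fderiv ℝ h x) ∘L (ContinuousLinearMap.adjoint (fderiv ℝ h x))))
    (hmup : ∀ x, ‖(fderiv ℝ h x) ∘L (ContinuousLinearMap.adjoint (fderiv ℝ h x))‖ ≤ mup)
    -- (ii) strong convexity of f̃ = f ∘ p on the constraint manifold
    (ρη : ℝ) (hρη : 0 < ρη)
    (hconv : ∀ u v : EuclideanSpace ℝ (Fin (n - m)),
      f (Ψ (0, v)) ≥ f (Ψ (0, u)) + ⟪gradient (fun η => f (Ψ (0, η))) u, v - u⟫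
        + (ρη / 2) * ‖v - u‖ ^ 2)
    (ηstar : EuclideanSpace ℝ (Fin (n - m)))
    (hcrit : gradient (fun η => f (Ψ (0, η))) ηstar = 0)
    (xstar : EuclideanSpace ℝ (Fin n)) (hxstar : xstar = Ψ (0, ηstar))
    -- (iii) global Lipschitz continuity of Φ and Φ⁻¹ (ℓ² product norm)
    (LΦ LΨ : ℝ)
    (hΦLip : ∀ x x' : EuclideanSpace ℝ (Fin n),
      Real.sqrt (‖h x - h x'‖ ^ 2 + ‖q x - q x'‖ ^ 2) ≤ LΦ * ‖x - x'‖)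
    (hΨLip : ∀ p p' : EuclideanSpace ℝ (Fin m) × EuclideanSpace ℝ (Fin (n - m)),
      ‖Ψ p - Ψ p'‖ ≤ LΨ * Real.sqrt (‖p.1 - p'.1‖ ^ 2 + ‖p.2 - p'.2‖ ^ 2))
    -- (iv) transverse Lipschitz bound
    (L₁ : ℝ) (hL₁ : 0 < L₁)
    (htrans : ∀ (y : EuclideanSpace ℝ (Fin m)) (η : EuclideanSpace ℝ (Fin (n - m))),
      ‖(fderiv ℝ q (Ψ (y, η))) (gradient f (Ψ (y, η)))
        - (fderiv ℝ q (Ψ (0, η))) (gradient f (Ψ (0, η)))‖ ≤ L₁ * ‖y‖)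
    -- (v) the least-squares multiplier map φ is globally Lipschitz with constant L₂
    (L₂ : ℝ)
    (hφLip : ∀ x₁ x₂ : EuclideanSpace ℝ (Fin n),
      ‖(-(Ring.inverse ((fderiv ℝ h x₁) ∘L (ContinuousLinearMap.adjoint (fderiv ℝ h x₁)))
            ((fderiv ℝ h x₁) (gradient f x₁))))
        - (-(Ring.inverse ((fderiv ℝ h x₂) ∘L (ContinuousLinearMap.adjoint (fderiv ℝ h x₂)))
            ((fderiv ℝ h x₂) (gradient f x₂))))‖ ≤ L₂ * ‖x₁ - x₂‖)
    (lamstar : EuclideanSpace ℝ (Fin m))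
    (hlamstar : lamstar =
      -(Ring.inverse ((fderiv ℝ h xstar) ∘L (ContinuousLinearMap.adjoint (fderiv ℝ h xstar)))
        ((fderiv ℝ h xstar) (gradient f xstar)))) :
    -- conclusion
    ∀ kp ki : ℝ,
      max (max 1 (2 * ki / (kp * mlow)))
        (12 * (mup * L₂ * LΨ) / mlow + 64 * (mup * L₂ * LΨ) ^ 2 / mlow ^ 2
          + 8 * L₁ ^ 2 * (mup * L₂ * LΨ) / (ρη ^ 2 * mlow)
          + 128 * L₁ ^ 2 * (mup * L₂ * LΨ) ^ 2 / (ρη ^ 2 * mlow ^ 2)) ≤ kp →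
      0 < ki → ki ≤ mlow * kp ^ 2 / 2 →
      ∃ cπ ρπ : ℝ, 0 < cπ ∧ 0 < ρπ ∧
        ∀ (x : ℝ → EuclideanSpace ℝ (Fin n)) (z : ℝ → EuclideanSpace ℝ (Fin m)),
          (∀ t, 0 ≤ t → HasDerivAt x
            (-gradient f (x t) - (ContinuousLinearMap.adjoint (fderiv ℝ h (x t)))
              (kp • h (x t) + ki • z t)) t) →
          (∀ t, 0 ≤ t → HasDerivAt z (h (x t)) t) →
          ∀ t, 0 ≤ t →
            Real.sqrt (‖x t - xstar‖ ^ 2 + ‖(kp • h (x t) + ki • z t) - lamstar‖ ^ 2)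
              ≤ cπ * Real.exp (-ρπ * t) *
                Real.sqrt (‖x 0 - xstar‖ ^ 2 + ‖(kp • h (x 0) + ki • z 0) - lamstar‖ ^ 2) := by
  intro kp ki hmax hki hkk
  have hkp1 : 1 ≤ kp := le_trans (le_trans (le_max_left _ _) (le_max_left _ _)) hmax
  have hkp : 0 < kp := by linarith
  have hκ := le_trans (le_max_right _ _) hmax
  -- signs of the constants
  have hmup0 : 0 ≤ mup := (norm_nonneg _).trans (hmup 0)
  have hL₂0 : 0 ≤ L₂ := by
    have h1 := (norm_nonneg _).trans
      (hφLip (EuclideanSpace.single (⟨0, by omega⟩ : Fin n) (1 : ℝ)) 0)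
    simpa using h1
  have hLΨ0 : 0 ≤ LΨ := by
    have h1 := (norm_nonneg _).trans
      (hΨLip (EuclideanSpace.single (⟨0, by omega⟩ : Fin m) (1 : ℝ), 0) 0)
    simpa using h1
  set L := mup * L₂ * LΨ with hL
  have hL0 : 0 ≤ L := by positivity
  have ha0 : 0 ≤ L / mlow := by positivity
  have hb0 : 0 < L₁ ^ 2 / ρη ^ 2 := by positivity
  have hκ' : 12 * (L / mlow) + 8 * (L / mlow) * (L₁ ^ 2 / ρη ^ 2) ≤ kp := by
    have e1 : 12 * L / mlow = 12 * (L / mlow) := by ring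
    have e2 : 8 * L₁ ^ 2 * L / (ρη ^ 2 * mlow) = 8 * (L / mlow) * (L₁ ^ 2 / ρη ^ 2) := by
      field_simp
    have p1 : 0 ≤ 64 * L ^ 2 / mlow ^ 2 := by positivity
    have p2 : 0 ≤ 128 * L₁ ^ 2 * L ^ 2 / (ρη ^ 2 * mlow ^ 2) := by positivity
    rw [e1, e2] at hκ
    linarith
  have h12 : 12 * (L / mlow) ≤ kp := by
    have : 0 ≤ 8 * (L / mlow) * (L₁ ^ 2 / ρη ^ 2) := by positivity
    linarith
  have h384 : 384 * (L / mlow) ^ 2 * (L₁ ^ 2 / ρη ^ 2) ≤ kp ^ 2 := by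
    have h1 : (12 * (L / mlow) + 8 * (L / mlow) * (L₁ ^ 2 / ρη ^ 2)) ^ 2 ≤ kp ^ 2 :=
      pow_le_pow_left₀ (by positivity) hκ' 2
    nlinarith [sq_nonneg (12 * (L / mlow) - 8 * (L / mlow) * (L₁ ^ 2 / ρη ^ 2))]
  -- equilibrium
  have hstar := hright (0, ηstar)
  rw [← hxstar] at hstar
  have hhs : h xstar = 0 := congrArg Prod.fst hstar
  have hqs : q xstar = ηstar := congrArg Prod.snd hstar
  have hfd : Differentiable ℝ f := hf.differentiable one_ne_zero
  have hhd : Differentiable ℝ h := hh.differentiable one_ne_zero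
  have hqd : Differentiable ℝ q := hq.differentiable one_ne_zero
  have hgrad := pi_gradient f h q Ψ hfd hhd hqd
    (hΨ.differentiable one_ne_zero) hleft hright horth₁ horth₂
  -- pointwise facts
  have hφ : ∀ x, ((fderiv ℝ h x) ∘L (ContinuousLinearMap.adjoint (fderiv ℝ h x)))
      (-(Ring.inverse ((fderiv ℝ h x) ∘L (ContinuousLinearMap.adjoint (fderiv ℝ h x)))
            ((fderiv ℝ h x) (gradient f x)))) = -((fderiv ℝ h x) (gradient f x)) := by
    intro x
    have h1 := Ring.mul_inverse_cancel _ (hinv x)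
    have h2 := congrArg (fun T => T ((fderiv ℝ h x) (gradient f x))) h1
    rw [map_neg]
    exact congrArg Neg.neg h2
  set φ : EuclideanSpace ℝ (Fin n) → EuclideanSpace ℝ (Fin m) := fun x =>
    -(Ring.inverse ((fderiv ℝ h x) ∘L (ContinuousLinearMap.adjoint (fderiv ℝ h x)))
            ((fderiv ℝ h x) (gradient f x))) with hφdef
  have hlam : lamstar = φ xstar := hlamstar
  have hxR : ∀ x, ‖x - xstar‖ ≤ LΨ * Real.sqrt (‖h x‖ ^ 2 + ‖q x - ηstar‖ ^ 2) := by
    intro x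
    have h1 := hΨLip (h x, q x) (0, ηstar)
    rw [hleft, ← hxstar] at h1
    simpa using h1
  have hRx : ∀ x, Real.sqrt (‖h x‖ ^ 2 + ‖q x - ηstar‖ ^ 2) ≤ LΦ * ‖x - xstar‖ := by
    intro x
    have h1 := hΦLip x xstar
    rw [hhs, hqs, sub_zero] at h1
    exact h1
  have hR : ∀ a b : ℝ, 0 ≤ a → 0 ≤ b → Real.sqrt (a ^ 2 + b ^ 2) ≤ a + b := by
    intro a b ha hb
    rw [Real.sqrt_le_left (by positivity)]
    nlinarith [mul_nonneg ha hb]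
  -- derivative of h along the flow, paired with w
  have hyd : ∀ x lam, ⟪lam - lamstar, (fderiv ℝ h x) (-gradient f x
      - (ContinuousLinearMap.adjoint (fderiv ℝ h x)) lam)⟫ ≤ -(mlow * ‖lam - lamstar‖ ^ 2)
        + ‖lam - lamstar‖ * (L * (‖h x‖ + ‖q x - ηstar‖)) := by
    intro x lam
    have e1 : (fderiv ℝ h x) (-gradient f x - (ContinuousLinearMap.adjoint (fderiv ℝ h x)) lam)
        = ((fderiv ℝ h x) ∘L (ContinuousLinearMap.adjoint (fderiv ℝ h x))) (φ x - lamstar)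
          - (fderiv ℝ h x) ((ContinuousLinearMap.adjoint (fderiv ℝ h x)) (lam - lamstar)) := by
      rw [map_sub, map_sub, map_neg, hφ x]
      simp only [map_sub, ContinuousLinearMap.comp_apply]
      abel
    rw [e1, inner_sub_right]
    have e2 : ⟪lam - lamstar,
        (fderiv ℝ h x) ((ContinuousLinearMap.adjoint (fderiv ℝ h x)) (lam - lamstar))⟫
        ≥ mlow * ‖lam - lamstar‖ ^ 2 := by
      rw [← ContinuousLinearMap.adjoint_inner_left]
      exact hcoerc x _
    have e3 : ‖((fderiv ℝ h x) ∘L (ContinuousLinearMap.adjoint (fderiv ℝ h x))) (φ x - lamstar)‖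
        ≤ L * (‖h x‖ + ‖q x - ηstar‖) := by
      calc _ ≤ ‖((fderiv ℝ h x) ∘L (ContinuousLinearMap.adjoint (fderiv ℝ h x)))‖
              * ‖φ x - lamstar‖ := ContinuousLinearMap.le_opNorm _ _
        _ ≤ mup * (L₂ * ‖x - xstar‖) := by
            apply mul_le_mul (hmup x) _ (norm_nonneg _) hmup0
            rw [hlam]; exact hφLip x xstar
        _ ≤ mup * (L₂ * (LΨ * (‖h x‖ + ‖q x - ηstar‖))) := by
            have h1 := hxR x
            have h2 := hR ‖h x‖ ‖q x - ηstar‖ (norm_nonneg _) (norm_nonneg _)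
            have h3 := h1.trans (mul_le_mul_of_nonneg_left h2 hLΨ0)
            gcongr
        _ = L * (‖h x‖ + ‖q x - ηstar‖) := by rw [hL]; ring
    have e4 := real_inner_le_norm (lam - lamstar)
      (((fderiv ℝ h x) ∘L (ContinuousLinearMap.adjoint (fderiv ℝ h x))) (φ x - lamstar))
    have e5 := mul_le_mul_of_nonneg_left e3 (norm_nonneg (lam - lamstar))
    linarith
  have hed : ∀ x lam, ⟪q x - ηstar, (fderiv ℝ q x) (-gradient f x
      - (ContinuousLinearMap.adjoint (fderiv ℝ h x)) lam)⟫ ≤ -(ρη * ‖q x - ηstar‖ ^ 2)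
        + L₁ * ‖h x‖ * ‖q x - ηstar‖ := by
    intro x lam
    have e0 : (fderiv ℝ q x) ((ContinuousLinearMap.adjoint (fderiv ℝ h x)) lam) = 0 :=
      congrArg (fun T => T lam) (horth₂ x)
    have e1 := htrans (h x) (q x)
    rw [hleft, ← hgrad] at e1
    rw [map_sub, e0, sub_zero, map_neg]
    set g := gradient (fun η => f (Ψ (0, η))) (q x) with hg
    have c1 := hconv (q x) ηstar
    have c2 := hconv ηstar (q x)
    rw [hcrit, inner_zero_left] at c2
    rw [← hg, norm_sub_rev ηstar (q x), ← neg_sub (q x) ηstar, inner_neg_right,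
      real_inner_comm] at c1
    have e2 : -((fderiv ℝ q x) (gradient f x)) = -((fderiv ℝ q x) (gradient f x) - g) - g := by
      abel
    rw [e2, inner_sub_right, inner_neg_right]
    have e3 := abs_real_inner_le_norm (q x - ηstar) ((fderiv ℝ q x) (gradient f x) - g)
    have e4 := mul_le_mul_of_nonneg_left e1 (norm_nonneg (q x - ηstar))
    have e5 := neg_abs_le ⟪q x - ηstar, (fderiv ℝ q x) (gradient f x) - g⟫
    nlinarith
  -- Lyapunov constants
  obtain ⟨A, hA⟩ : ∃ A, A = 2 * ki / (mlow * kp ^ 2) := ⟨_, rfl⟩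
  obtain ⟨B, hB⟩ : ∃ B, B = ki * kp * ρη / (6 * L₁ ^ 2) := ⟨_, rfl⟩
  have hA0 : 0 < A := by rw [hA]; positivity
  have hB0 : 0 < B := by rw [hB]; positivity
  obtain ⟨d, hd0, hd⟩ : ∃ d : ℝ, 0 < d ∧ ∀ W y e : ℝ, d * (W ^ 2 + y ^ 2 + e ^ 2) ≤
      (ki / kp) * (W ^ 2 / 2 + (kp * y) ^ 2 / 12 + (kp * e * ρη / L₁) ^ 2 / 24) := by
    refine ⟨(ki / kp) * min (1 / 2) (min (kp ^ 2 / 12) ((kp * ρη / L₁) ^ 2 / 24)),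
      by positivity, fun W y e => ?_⟩
    rw [mul_assoc]
    apply mul_le_mul_of_nonneg_left _ (by positivity)
    set M := min (1 / 2) (min (kp ^ 2 / 12) ((kp * ρη / L₁) ^ 2 / 24)) with hM
    have m1 : M ≤ 1 / 2 := min_le_left _ _
    have m2 : M ≤ kp ^ 2 / 12 := (min_le_right _ _).trans (min_le_left _ _)
    have m3 : M ≤ (kp * ρη / L₁) ^ 2 / 24 := (min_le_right _ _).trans (min_le_right _ _)
    have n1 := mul_le_mul_of_nonneg_right m1 (sq_nonneg W)
    have n2 := mul_le_mul_of_nonneg_right m2 (sq_nonneg y)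
    have n3 := mul_le_mul_of_nonneg_right m3 (sq_nonneg e)
    have r3 : (kp * e * ρη / L₁) ^ 2 = (kp * ρη / L₁) ^ 2 * e ^ 2 := by ring
    rw [r3]
    linarith
  -- upper and lower bounds
  obtain ⟨c2, hc20, hc2⟩ : ∃ c2 : ℝ, 0 < c2 ∧ ∀ (w y : EuclideanSpace ℝ (Fin m)) (e : ℝ),
      A * ‖w‖ ^ 2 + B * e ^ 2 + ‖w - kp • y‖ ^ 2 ≤ c2 * (‖w‖ ^ 2 + ‖y‖ ^ 2 + e ^ 2) := by
    refine ⟨A + B + 2 + 2 * kp ^ 2, by positivity, fun w y e => ?_⟩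
    have h1 : ‖w - kp • y‖ ≤ ‖w‖ + kp * ‖y‖ := by
      have := norm_sub_le w (kp • y)
      rwa [norm_smul, Real.norm_of_nonneg hkp.le] at this
    have h2 : ‖w - kp • y‖ ^ 2 ≤ (‖w‖ + kp * ‖y‖) ^ 2 := pow_le_pow_left₀ (norm_nonneg _) h1 2
    have h3 : (‖w‖ + kp * ‖y‖) ^ 2 ≤ 2 * ‖w‖ ^ 2 + 2 * kp ^ 2 * ‖y‖ ^ 2 := by
      nlinarith [sq_nonneg (‖w‖ - kp * ‖y‖)]
    have p1 : 0 ≤ (B + 2 * kp ^ 2) * ‖w‖ ^ 2 := by positivity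
    have p2 : 0 ≤ (A + B + 2) * ‖y‖ ^ 2 := by positivity
    have p3 : 0 ≤ (A + 2 + 2 * kp ^ 2) * e ^ 2 := by positivity
    linarith
  obtain ⟨c1, hc10, hc1⟩ : ∃ c1 : ℝ, 0 < c1 ∧ ∀ (w y : EuclideanSpace ℝ (Fin m)) (e : ℝ),
      ‖w‖ ^ 2 + ‖y‖ ^ 2 + e ^ 2 ≤ c1 * (A * ‖w‖ ^ 2 + B * e ^ 2 + ‖w - kp • y‖ ^ 2) := by
    refine ⟨3 / A + 1 / B + 2, by positivity, fun w y e => ?_⟩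
    have h1 : ‖y‖ ≤ ‖w‖ + ‖w - kp • y‖ := by
      have := norm_sub_le w (w - kp • y)
      rw [sub_sub_cancel, norm_smul, Real.norm_of_nonneg hkp.le] at this
      nlinarith [norm_nonneg y]
    have h2 : ‖y‖ ^ 2 ≤ (‖w‖ + ‖w - kp • y‖) ^ 2 := pow_le_pow_left₀ (norm_nonneg _) h1 2
    have h3 : (‖w‖ + ‖w - kp • y‖) ^ 2 ≤ 2 * ‖w‖ ^ 2 + 2 * ‖w - kp • y‖ ^ 2 := by
      nlinarith [sq_nonneg (‖w‖ - ‖w - kp • y‖)]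
    have q1 : 3 / A * (A * ‖w‖ ^ 2) = 3 * ‖w‖ ^ 2 := by field_simp
    have q2 : 1 / B * (B * e ^ 2) = e ^ 2 := by field_simp
    have p1 : 0 ≤ (1 / B + 2) * (A * ‖w‖ ^ 2) := by positivity
    have p2 : 0 ≤ (3 / A + 2) * (B * e ^ 2) := by positivity
    have p3 : 0 ≤ (3 / A + 1 / B) * ‖w - kp • y‖ ^ 2 := by positivity
    linarith
  have hK : 0 < (LΨ ^ 2 + 1) * c1 * c2 * (LΦ ^ 2 + 1) := by positivity
  refine ⟨Real.sqrt ((LΨ ^ 2 + 1) * c1 * c2 * (LΦ ^ 2 + 1)), d / c2, Real.sqrt_pos.2 hK,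
    by positivity, ?_⟩
  intro x z hx hz t ht
  -- derivative of the Lyapunov function
  set lam : ℝ → EuclideanSpace ℝ (Fin m) := fun s => kp • h (x s) + ki • z s with hlamdef
  have hVd : ∀ s, 0 ≤ s → HasDerivAt (fun s => A * ‖lam s - lamstar‖ ^ 2
      + B * ‖q (x s) - ηstar‖ ^ 2 + ‖(lam s - lamstar) - kp • h (x s)‖ ^ 2)
      (A * (2 * ⟪lam s - lamstar, kp • (fderiv ℝ h (x s)) (-gradient f (x s)
          - (ContinuousLinearMap.adjoint (fderiv ℝ h (x s))) (lam s)) + ki • h (x s)⟫)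
        + B * (2 * ⟪q (x s) - ηstar, (fderiv ℝ q (x s)) (-gradient f (x s)
          - (ContinuousLinearMap.adjoint (fderiv ℝ h (x s))) (lam s))⟫)
        + 2 * ⟪(lam s - lamstar) - kp • h (x s), ki • h (x s)⟫) s := by
    intro s hs
    have dh : HasDerivAt (fun s => h (x s)) ((fderiv ℝ h (x s)) (-gradient f (x s)
          - (ContinuousLinearMap.adjoint (fderiv ℝ h (x s))) (lam s))) s :=
      (hhd (x s)).hasFDerivAt.comp_hasDerivAt s (hx s hs)
    have dq : HasDerivAt (fun s => q (x s)) ((fderiv ℝ q (x s)) (-gradient f (x s)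
          - (ContinuousLinearMap.adjoint (fderiv ℝ h (x s))) (lam s))) s :=
      (hqd (x s)).hasFDerivAt.comp_hasDerivAt s (hx s hs)
    have dl : HasDerivAt lam (kp • (fderiv ℝ h (x s)) (-gradient f (x s)
          - (ContinuousLinearMap.adjoint (fderiv ℝ h (x s))) (lam s)) + ki • h (x s)) s :=
      (dh.const_smul kp).add ((hz s hs).const_smul ki)
    have dσ : HasDerivAt (fun s => (lam s - lamstar) - kp • h (x s)) (ki • h (x s)) s := by
      have := (dl.sub_const lamstar).sub (dh.const_smul kp)
      rw [add_sub_cancel_left] at this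
      exact this
    exact ((((dl.sub_const lamstar).norm_sq).const_mul A).add
      (((dq.sub_const ηstar).norm_sq).const_mul B)).add dσ.norm_sq
  have hVle := pi_gronwall _ _ (2 * d / c2) hVd (by
    intro s hs
    have i1 := hyd (x s) (lam s)
    have i2 := hed (x s) (lam s)
    have i3 := real_inner_le_norm (lam s - lamstar) (h (x s))
    have i4 := hc2 (lam s - lamstar) (h (x s)) ‖q (x s) - ηstar‖
    have i5 := pi_scalar mlow kp ki ρη L₁ L ‖lam s - lamstar‖ ‖h (x s)‖ ‖q (x s) - ηstar‖
      hmlow hkp hki hρη hL₁ (norm_nonneg _) (norm_nonneg _) h12 h384 hkk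
    have i6 := hd ‖lam s - lamstar‖ ‖h (x s)‖ ‖q (x s) - ηstar‖
    rw [← hA, ← hB] at i5
    rw [inner_add_right, real_inner_smul_right, real_inner_smul_right, real_inner_smul_right,
      inner_sub_left (lam s - lamstar), real_inner_smul_left, real_inner_self_eq_norm_sq]
    exact pi_deriv_bound A B kp ki mlow ρη L L₁ _ _ _ _ _ _ d c2 _ hA0 hB0 hkp hki hc20 hd0
      i1 i2 i3 i4 (i5.trans (neg_le_neg i6))) t ht
  have hsq : ∀ s, Real.sqrt (‖h (x s)‖ ^ 2 + ‖q (x s) - ηstar‖ ^ 2) ^ 2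
      = ‖h (x s)‖ ^ 2 + ‖q (x s) - ηstar‖ ^ 2 := fun s => Real.sq_sqrt (by positivity)
  have k1 := pow_le_pow_left₀ (norm_nonneg _) (hxR (x t)) 2
  have k2 := pow_le_pow_left₀ (Real.sqrt_nonneg _) (hRx (x 0)) 2
  rw [mul_pow, hsq] at k1
  rw [mul_pow, hsq] at k2
  have hr : -(2 * d / c2) = -(2 * (d / c2)) := by ring
  rw [hr] at hVle
  refine pi_final _ _ (‖lam 0 - lamstar‖ ^ 2 + ‖h (x 0)‖ ^ 2 + ‖q (x 0) - ηstar‖ ^ 2)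
    (‖lam t - lamstar‖ ^ 2 + ‖h (x t)‖ ^ 2 + ‖q (x t) - ηstar‖ ^ 2) _ _
    (LΨ ^ 2 + 1) (LΦ ^ 2 + 1) c1 c2 (d / c2) t (by positivity) (by positivity) hc10 hc20
    ?_ (hc1 _ _ _) hVle (hc2 _ _ _) ?_
  · have p1 : 0 ≤ ‖h (x t)‖ ^ 2 + ‖q (x t) - ηstar‖ ^ 2 := by positivity
    have p2 : 0 ≤ LΨ ^ 2 * ‖lam t - lamstar‖ ^ 2 := by positivity
    linarith
  · have p1 : 0 ≤ ‖x 0 - xstar‖ ^ 2 := by positivity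
    have p2 : 0 ≤ LΦ ^ 2 * ‖lam 0 - lamstar‖ ^ 2 := by positivity
    linarith
end
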